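/- Theorem 5.1(ii): Suppose the kernel k is homogeneous of degree β−1 for some β∈(0,2) with β≠1 and k(1,·)∈L^{1+ε}((0,1)) for some ε>0, and that x↦Φ̂(−x) is completely monotone on (0,∞). Let δ∈(β,2] with δ≠1 and ρ₀∈[−1,1], and set ψ_{δ,ρ₀}(p):=|p|^δ(1−iρ₀·sign(p)·tan(πδ/2)) for p∈ℝ. Let A be a nonnegative random variable with E[e^{−λA}]=Φ̂(−λ) for all λ>0, and let (Y_t)_{t≥0} be a jointly measurable real-valued stochastic process, independent of A, with E[e^{ipY_t}]=e^{−t^{β}ψ_{δ,ρ₀}(p)} for all t≥0 and p∈ℝ. Then E[e^{ip·A^{1/δ}Y_t}] = Φ̂(−t^β ψ_{δ,ρ₀}(p)) for all p∈ℝ and t≥0, and the process (A^{1/δ}Y_t)_{t≥0} provides a stochastic solution to the one-dimensional evolution equation u(t,x)=u₀(x)+∫_0^t k(t,s) L_{δ,ρ₀}u(s,x) ds, where L_{δ,ρ₀} is the Fourier multiplier operator with symbol −ψ_{δ,ρ₀}. -/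

import Mathlib

open MeasureTheory Filter

noncomputable section

noncomputable def FT1 (f : ℝ → ℂ) (p : ℝ) : ℂ :=
  (((2 * Real.pi) ^ (-(1 : ℝ) / 2) : ℝ) : ℂ) *
    ∫ x : ℝ, Complex.exp (-Complex.I * ((p * x : ℝ) : ℂ)) * f x

noncomputable def FTinv1 (f : ℝ → ℂ) (x : ℝ) : ℂ :=
  (((2 * Real.pi) ^ (-(1 : ℝ) / 2) : ℝ) : ℂ) *
    ∫ p : ℝ, Complex.exp (Complex.I * ((p * x : ℝ) : ℂ)) * f p

noncomputable def Lop1 (ψ : ℝ → ℂ) (v : ℝ → ℂ) : ℝ → ℂ :=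
  FTinv1 fun p => -ψ p * FT1 v p

noncomputable def charFn1 {Ω : Type*} [MeasurableSpace Ω] (P : Measure Ω)
    (X : Ω → ℝ) (p : ℝ) : ℂ :=
  ∫ ω, Complex.exp (Complex.I * ((p * X ω : ℝ) : ℂ)) ∂P

def ProvidesSol1 {Ω : Type*} [MeasurableSpace Ω] (P : Measure Ω)
    (X : ℝ → Ω → ℝ) (k : ℝ → ℝ → ℝ) (ψ : ℝ → ℂ) : Prop :=
  ∀ u₀ : SchwartzMap ℝ ℂ,
    (∀ s : ℝ, 0 ≤ s →
      MeasureTheory.Integrable (fun p => ψ p * FT1 (fun y => ∫ ω, u₀ (y + X s ω) ∂P) p)) ∧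
    (∀ t : ℝ, 0 < t → ∀ x : ℝ,
      (∫ ω, u₀ (x + X t ω) ∂P) =
        u₀ x + ∫ s in Set.Ioc (0:ℝ) t,
          (k t s : ℂ) * Lop1 ψ (fun y => ∫ ω, u₀ (y + X s ω) ∂P) x) ∧
    (∀ x : ℝ,
      Filter.Tendsto (fun t : ℝ => ∫ ω, u₀ (x + X t ω) ∂P)
        (nhdsWithin 0 (Set.Ioi 0)) (nhds (u₀ x)))

noncomputable def coeff (k : ℝ → ℝ → ℝ) : ℕ → ℝ → ℝ
  | 0, _ => 1
  | n + 1, t => if 0 < t then ∫ s in Set.Ioc (0:ℝ) t, k t s * coeff k n s else 0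

noncomputable def Phi (k : ℝ → ℝ → ℝ) (t : ℝ) (l : ℂ) : ℂ :=
  ∑' n : ℕ, (coeff k n t : ℂ) * l ^ n

noncomputable def PhiR (k : ℝ → ℝ → ℝ) (t : ℝ) (x : ℝ) : ℝ :=
  ∑' n : ℕ, coeff k n t * x ^ n

noncomputable def chat (k : ℝ → ℝ → ℝ) (β : ℝ) : ℕ → ℝ
  | 0 => 1
  | n + 1 => chat k β n * ∫ s in Set.Ioc (0:ℝ) 1, k 1 s * s ^ (β * (n : ℝ))

noncomputable def PhiHatC (k : ℝ → ℝ → ℝ) (β : ℝ) (z : ℂ) : ℂ :=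
  ∑' n : ℕ, (chat k β n : ℂ) * z ^ n

noncomputable def PhiHatR (k : ℝ → ℝ → ℝ) (β : ℝ) (x : ℝ) : ℝ :=
  ∑' n : ℕ, chat k β n * x ^ n

def CMon (f : ℝ → ℝ) : Prop :=
  ContDiffOn ℝ (⊤ : ℕ∞) f (Set.Ioi 0) ∧
  ∀ (n : ℕ), ∀ x ∈ Set.Ioi (0:ℝ),
    0 ≤ (-1 : ℝ) ^ n * iteratedDerivWithin n f (Set.Ioi 0) x

noncomputable def psiStable (δ ρ : ℝ) (p : ℝ) : ℂ :=
  ((|p| ^ δ : ℝ) : ℂ) *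
    (1 - Complex.I * (ρ : ℂ) * ((Real.sign p : ℝ) : ℂ) *
      ((Real.tan (Real.pi * δ / 2) : ℝ) : ℂ))

/-!
Conditioning on `A` and using `a * ψ(p) = ψ(a ^ (1/δ) * p)` turns the characteristic function of
`A ^ (1/δ) * Y_t` at `p` into the Laplace transform of `A` at `t ^ β * ψ(p)`. The Laplace transform
is holomorphic in the open right half-plane, continuous on the closed one, and agrees with the
entire function `z ↦ Φ̂(-z)` on the positive half-line, hence on the whole closed half-plane, which
contains `t ^ β * ψ(p)` because `exp (-t ^ β * ψ(p))` is a characteristic function.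

The recursion for the coefficients of `Φ̂` says that `Φ̂(z) = 1 + z ∫₀¹ k(1, s) Φ̂(s ^ β z) ds`, and
homogeneity rescales this to `Φ̂(t ^ β w) = 1 + w ∫₀ᵗ k(t, s) Φ̂(s ^ β w) ds`. With `w = -ψ(p)` this
is the evolution equation on the Fourier side; multiplying by `𝔉 u₀` and inverting, with Fubini to
exchange the `s`- and `p`-integrals, gives the equation for `E[u₀(x + A ^ (1/δ) * Y_t)]`.
-/

open Set ProbabilityTheory
open scoped Topology FourierTransform SchwartzMap

section Fourier

theorem norm_cexp_I_mul_ofReal (a : ℝ) : ‖Complex.exp (Complex.I * (a : ℂ))‖ = 1 := by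
  rw [mul_comm, Complex.norm_exp_ofReal_mul_I]

theorem integrable_cexp_I_mul_ofReal_mul {α : Type*} [MeasurableSpace α] {μ : Measure α}
    {θ : α → ℝ} {f : α → ℂ} (hθ : AEMeasurable θ μ) (hf : Integrable f μ) :
    Integrable (fun a => Complex.exp (Complex.I * (θ a : ℂ)) * f a) μ :=
  hf.bdd_mul (c := 1) (by fun_prop)
    (Eventually.of_forall fun a => (norm_cexp_I_mul_ofReal (θ a)).le)

theorem FT1_eq_FTinv1_neg (f : ℝ → ℂ) (p : ℝ) : FT1 f p = FTinv1 f (-p) := by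
  simp only [FT1, FTinv1]
  congr! 5 with x
  push_cast
  ring

theorem FTinv1_const_mul (c : ℂ) (f : ℝ → ℂ) (x : ℝ) :
    FTinv1 (fun p => c * f p) x = c * FTinv1 f x := by
  simp only [FTinv1, mul_left_comm _ c, integral_const_mul]

theorem FTinv1_add {f g : ℝ → ℂ} (hf : Integrable f) (hg : Integrable g) (x : ℝ) :
    FTinv1 (fun p => f p + g p) x = FTinv1 f x + FTinv1 g x := by
  have hθ : AEMeasurable (fun p : ℝ => p * x) := by fun_prop
  simp only [FTinv1, mul_add, integral_add (integrable_cexp_I_mul_ofReal_mul hθ hf)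
    (integrable_cexp_I_mul_ofReal_mul hθ hg)]

theorem FTinv1_apply_add (f : ℝ → ℂ) (x a : ℝ) :
    FTinv1 f (x + a) = FTinv1 (fun p => Complex.exp (Complex.I * ((p * a : ℝ) : ℂ)) * f p) x := by
  simp only [FTinv1, ← mul_assoc, ← Complex.exp_add]
  congr! 5 with p
  push_cast
  ring

theorem FTinv1_comp_add_right (f : ℝ → ℂ) (a x : ℝ) :
    FTinv1 (fun y => f (y + a)) x =
      Complex.exp (Complex.I * ((-x * a : ℝ) : ℂ)) * FTinv1 f x := by
  have hshift := integral_add_right_eq_self (μ := volume)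
    (fun y : ℝ => Complex.exp (Complex.I * ((-x * a : ℝ) : ℂ)) *
      (Complex.exp (Complex.I * ((y * x : ℝ) : ℂ)) * f y)) a
  simp only [FTinv1]
  rw [mul_left_comm, ← integral_const_mul (Complex.exp _), ← hshift]
  congr! 3 with y
  rw [← mul_assoc, ← Complex.exp_add]
  congr 2
  push_cast
  ring

theorem integral_FTinv1 {α : Type*} [MeasurableSpace α] {μ : Measure α} [SFinite μ]
    {G : α → ℝ → ℂ} (hG : Integrable (Function.uncurry G) (μ.prod volume)) (x : ℝ) :
    ∫ a, FTinv1 (G a) x ∂μ = FTinv1 (fun p => ∫ a, G a p ∂μ) x := by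
  have hint := integrable_cexp_I_mul_ofReal_mul (θ := fun q : α × ℝ => q.2 * x) (by fun_prop) hG
  simp only [FTinv1, integral_const_mul]
  rw [integral_integral_swap hint]
  simp only [integral_const_mul]

theorem tendsto_FTinv1_of_dominated {ι : Type*} {l : Filter ι} [l.IsCountablyGenerated]
    {F : ι → ℝ → ℂ} {f : ℝ → ℂ} {bound : ℝ → ℝ}
    (hF : ∀ᶠ i in l, AEStronglyMeasurable (F i)) (hbound : Integrable bound)
    (hle : ∀ᶠ i in l, ∀ p, ‖F i p‖ ≤ bound p) (hlim : ∀ p, Tendsto (F · p) l (𝓝 (f p))) (x : ℝ) :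
    Tendsto (fun i => FTinv1 (F i) x) l (𝓝 (FTinv1 f x)) := by
  refine (tendsto_integral_filter_of_dominated_convergence bound ?_ ?_ hbound ?_).const_mul _
  · filter_upwards [hF] with i hi
    exact AEStronglyMeasurable.mul (by fun_prop) hi
  · filter_upwards [hle] with i hi
    refine Eventually.of_forall fun p => ?_
    rw [norm_mul, norm_cexp_I_mul_ofReal, one_mul]
    exact hi p
  · exact Eventually.of_forall fun p => (hlim p).const_mul _

theorem FT1_eq_fourier (f : ℝ → ℂ) (p : ℝ) :
    FT1 f p = (((2 * Real.pi) ^ (-(1 : ℝ) / 2) : ℝ) : ℂ) * 𝓕 f (p / (2 * Real.pi)) := by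
  rw [FT1, Real.fourier_real_eq_integral_exp_smul]
  congr! 4 with x
  push_cast
  field_simp

theorem integrable_FT1_iff {f : ℝ → ℂ} : Integrable (FT1 f) ↔ Integrable (𝓕 f) := by
  have hc : ((2 * Real.pi) ^ (-(1 : ℝ) / 2) : ℝ) ≠ 0 := by positivity
  rw [funext (FT1_eq_fourier f), integrable_const_mul_iff (by simpa using hc),
    integrable_comp_div_iff _ (by positivity)]

theorem FTinv1_FT1 {f : ℝ → ℂ} (hf : Continuous f) (hfi : Integrable f)
    (hFi : Integrable (FT1 f)) (x : ℝ) : FTinv1 (FT1 f) x = f x := by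
  have h2π : (0 : ℝ) < 2 * Real.pi := by positivity
  have hconst : ((2 * Real.pi) ^ (-(1 : ℝ) / 2)) ^ 2 * (2 * Real.pi) = 1 := by
    rw [← Real.rpow_natCast, ← Real.rpow_mul h2π.le, ← Real.rpow_add_one h2π.ne']
    norm_num
  set g : ℝ → ℂ := fun v => Complex.exp (((2 * Real.pi * (v * x) : ℝ) : ℂ) * Complex.I) * 𝓕 f v
  have hg : ∀ p : ℝ, Complex.exp (Complex.I * ((p * x : ℝ) : ℂ)) * FT1 f p =
      (((2 * Real.pi) ^ (-(1 : ℝ) / 2) : ℝ) : ℂ) * g (p / (2 * Real.pi)) := fun p => by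
    rw [FT1_eq_fourier, mul_left_comm, mul_comm Complex.I]
    simp only [g, ← mul_assoc, mul_div_cancel₀ _ h2π.ne']
  calc FTinv1 (FT1 f) x
      = ((((2 * Real.pi) ^ (-(1 : ℝ) / 2)) ^ 2 : ℝ) : ℂ) * ∫ p : ℝ, g (p / (2 * Real.pi)) := by
        rw [FTinv1, integral_congr_ae (Eventually.of_forall hg), integral_const_mul, ← mul_assoc,
          ← Complex.ofReal_mul, ← sq]
    _ = ∫ v : ℝ, g v := by
        rw [Measure.integral_comp_div g, abs_of_pos h2π, Complex.real_smul, ← mul_assoc,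
          ← Complex.ofReal_mul, hconst, Complex.ofReal_one, one_mul]
    _ = 𝓕⁻ (𝓕 f) x := by
        simp only [g, Real.fourierInv_eq', smul_eq_mul, RCLike.inner_apply, conj_trivial,
          mul_comm x]
    _ = f x := by rw [hf.fourierInv_fourier_eq hfi (integrable_FT1_iff.1 hFi)]

theorem integrable_FT1_schwartz (u : 𝓢(ℝ, ℂ)) : Integrable (FT1 u) :=
  integrable_FT1_iff.2 (SchwartzMap.fourier_coe u ▸ (𝓕 u).integrable)

theorem integrable_pow_mul_norm_FT1_schwartz (u : 𝓢(ℝ, ℂ)) (n : ℕ) :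
    Integrable fun p => |p| ^ n * ‖FT1 u p‖ := by
  have h2π : (0 : ℝ) < 2 * Real.pi := by positivity
  have hdiv := ((𝓕 u).integrable_pow_mul volume n).comp_div h2π.ne'
  refine (hdiv.const_mul ((2 * Real.pi) ^ n * (2 * Real.pi) ^ (-(1 : ℝ) / 2))).congr
    (Eventually.of_forall fun p => ?_)
  simp only [FT1_eq_fourier, norm_mul, Complex.norm_real, Real.norm_eq_abs, abs_div,
    abs_of_pos h2π, abs_of_pos (Real.rpow_pos_of_pos h2π _), SchwartzMap.fourier_coe, div_pow]
  field_simp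

theorem integrable_mul_FT1_schwartz {ψ : ℝ → ℂ} {C : ℝ} {n : ℕ}
    (hψ : Measurable ψ) (hbound : ∀ p, ‖ψ p‖ ≤ C * (1 + |p| ^ n)) (u : 𝓢(ℝ, ℂ)) :
    Integrable fun p => ψ p * FT1 u p := by
  have hdom := ((integrable_FT1_schwartz u).norm.add
    (integrable_pow_mul_norm_FT1_schwartz u n)).const_mul C
  refine hdom.mono' (hψ.aestronglyMeasurable.mul (integrable_FT1_schwartz u).1)
    (Eventually.of_forall fun p => ?_)
  calc ‖ψ p * FT1 u p‖ ≤ C * (1 + |p| ^ n) * ‖FT1 u p‖ := by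
        rw [norm_mul]
        gcongr
        exact hbound p
    _ = C * (‖FT1 u p‖ + |p| ^ n * ‖FT1 u p‖) := by ring

end Fourier

section RandomShift

variable {Ω : Type*} [MeasurableSpace Ω] {P : Measure Ω} {X : Ω → ℝ}

theorem charFn1_eq_charFun_map (hX : AEMeasurable X P) (p : ℝ) :
    charFn1 P X p = charFun (P.map X) p := by
  rw [charFun_apply_real, integral_map hX (by fun_prop), charFn1]
  congr! 3 with ω
  push_cast
  ring

theorem norm_charFn1_le_one [IsProbabilityMeasure P] (X : Ω → ℝ) (p : ℝ) :
    ‖charFn1 P X p‖ ≤ 1 := by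
  have hle := norm_integral_le_of_norm_le_const (μ := P) (Eventually.of_forall fun ω =>
    (norm_cexp_I_mul_ofReal (p * X ω)).le)
  rwa [probReal_univ, mul_one] at hle

theorem FT1_integral_comp_add [IsFiniteMeasure P] {u : ℝ → ℂ} (hu : Measurable u)
    (hui : Integrable u) (hX : AEMeasurable X P) (p : ℝ) :
    FT1 (fun y => ∫ ω, u (y + X ω) ∂P) p = FT1 u p * charFn1 P X p := by
  have hprod : Integrable (Function.uncurry fun ω y => u (y + X ω)) (P.prod volume) := by
    have hm : AEMeasurable (fun q : Ω × ℝ => q.2 + X q.1) (P.prod volume) :=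
      measurable_snd.aemeasurable.add hX.comp_fst
    refine (integrable_prod_iff (hu.comp_aemeasurable hm).aestronglyMeasurable).2 ?_
    refine ⟨Eventually.of_forall fun ω => hui.comp_add_right (X ω), ?_⟩
    refine (integrable_const (∫ y, ‖u y‖)).congr (Eventually.of_forall fun ω => ?_)
    exact (integral_add_right_eq_self (fun y => ‖u y‖) (X ω)).symm
  simp only [FT1_eq_FTinv1_neg]
  rw [← integral_FTinv1 hprod]
  simp only [FTinv1_comp_add_right, neg_neg, integral_mul_const, charFn1]
  rw [mul_comm]

theorem FT1_integral_schwartz_add [IsFiniteMeasure P] (u : 𝓢(ℝ, ℂ)) (hX : AEMeasurable X P) :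
    FT1 (fun y => ∫ ω, u (y + X ω) ∂P) = fun p => FT1 u p * charFn1 P X p :=
  funext (FT1_integral_comp_add u.continuous.measurable u.integrable hX)

theorem integral_FTinv1_add [IsFiniteMeasure P] {g : ℝ → ℂ} (hg : Integrable g)
    (hX : AEMeasurable X P) (x : ℝ) :
    ∫ ω, FTinv1 g (x + X ω) ∂P = FTinv1 (fun p => g p * charFn1 P X p) x := by
  have hprod : Integrable (Function.uncurry fun ω p =>
      Complex.exp (Complex.I * ((p * X ω : ℝ) : ℂ)) * g p) (P.prod volume) :=
    integrable_cexp_I_mul_ofReal_mul (measurable_snd.aemeasurable.mul hX.comp_fst)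
      (hg.comp_snd P)
  simp only [FTinv1_apply_add g x]
  rw [integral_FTinv1 hprod]
  simp only [integral_mul_const, charFn1, mul_comm (g _)]

theorem integral_schwartz_add [IsFiniteMeasure P] (u : 𝓢(ℝ, ℂ)) (hX : AEMeasurable X P)
    (x : ℝ) :
    ∫ ω, u (x + X ω) ∂P = FTinv1 (fun p => FT1 u p * charFn1 P X p) x := by
  have hFu := integrable_FT1_schwartz u
  simp only [← integral_FTinv1_add hFu hX, FTinv1_FT1 u.continuous u.integrable hFu]

end RandomShift

section Volterra

variable {Ω : Type*} [MeasurableSpace Ω] {P : Measure Ω} [IsProbabilityMeasure P]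
  {X : ℝ → Ω → ℝ} {k : ℝ → ℝ → ℝ} {ψ : ℝ → ℂ} {φ : ℝ → ℝ → ℂ}

theorem integrable_uncurry_mul_mul_bdd {α γ : Type*} [MeasurableSpace α] [MeasurableSpace γ]
    {μ : Measure α} {ν : Measure γ} [SFinite μ] [SFinite ν] {κ : α → ℝ} {g : γ → ℂ}
    {φ : α → γ → ℂ} {C : ℝ} (hκ : Integrable κ μ) (hg : Integrable g ν)
    (hφ : Measurable (Function.uncurry φ)) (hφ_le : ∀ᵐ a ∂μ, ∀ b, ‖φ a b‖ ≤ C) :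
    Integrable (Function.uncurry fun a b => (κ a : ℂ) * (g b * φ a b)) (μ.prod ν) := by
  have hκg : Integrable (fun q : α × γ => (κ q.1 : ℂ) * g q.2) (μ.prod ν) := hκ.ofReal.mul_prod hg
  refine (hκg.mul_bdd (c := C) hφ.aestronglyMeasurable ?_).congr
    (Eventually.of_forall fun q => mul_assoc _ _ _)
  filter_upwards [Measure.quasiMeasurePreserving_fst.ae hφ_le] with q hq using hq q.2

theorem integral_schwartz_add_eq_volterra (u : 𝓢(ℝ, ℂ)) {t : ℝ} (ht : 0 < t)
    (hX : ∀ s, 0 ≤ s → AEMeasurable (X s) P)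
    (hψu : Integrable fun p => ψ p * FT1 u p) (hk : IntegrableOn (k t) (Ioc 0 t))
    (hφ : Measurable (Function.uncurry φ)) (hXφ : ∀ s, 0 ≤ s → ∀ p, charFn1 P (X s) p = φ s p)
    (hvolterra : ∀ p, φ t p = 1 + ∫ s in Ioc 0 t, (k t s : ℂ) * (-ψ p * φ s p)) (x : ℝ) :
    ∫ ω, u (x + X t ω) ∂P =
      u x + ∫ s in Ioc 0 t, (k t s : ℂ) * Lop1 ψ (fun y => ∫ ω, u (y + X s ω) ∂P) x := by
  have hFu := integrable_FT1_schwartz u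
  set G : ℝ → ℝ → ℂ := fun s p => (k t s : ℂ) * (-(ψ p * FT1 u p) * φ s p)
  have hG : Integrable (Function.uncurry G) ((volume.restrict (Ioc 0 t)).prod volume) := by
    refine integrable_uncurry_mul_mul_bdd (C := 1) hk hψu.neg hφ ?_
    filter_upwards [ae_restrict_mem measurableSet_Ioc] with s hs p
    exact hXφ s hs.1.le p ▸ norm_charFn1_le_one (X s) p
  have hFuφ : ∀ p, FT1 u p * charFn1 P (X t) p = FT1 u p + ∫ s in Ioc 0 t, G s p := fun p => by
    rw [hXφ t ht.le, hvolterra, mul_add, mul_one, ← integral_const_mul]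
    congr! 3
    ring
  have hLop : ∀ s ∈ Ioc 0 t,
      (k t s : ℂ) * Lop1 ψ (fun y => ∫ ω, u (y + X s ω) ∂P) x = FTinv1 (G s) x := fun s hs => by
    rw [Lop1, FT1_integral_schwartz_add u (hX s hs.1.le), ← FTinv1_const_mul]
    simp only [G, hXφ s hs.1.le]
    congr! 3 with p
    ring
  calc ∫ ω, u (x + X t ω) ∂P
      = FTinv1 (fun p => FT1 u p + ∫ s in Ioc 0 t, G s p) x := by
        rw [integral_schwartz_add u (hX t ht.le), funext hFuφ]
    _ = u x + ∫ s in Ioc 0 t, FTinv1 (G s) x := by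
        rw [integral_FTinv1 hG, ← FTinv1_FT1 u.continuous u.integrable hFu x]
        exact FTinv1_add hFu hG.integral_prod_right x
    _ = _ := by rw [setIntegral_congr_fun measurableSet_Ioc hLop]

theorem tendsto_integral_schwartz_add {ι : Type*} {l : Filter ι} [l.IsCountablyGenerated]
    {X : ι → Ω → ℝ} (u : 𝓢(ℝ, ℂ)) (hX : ∀ᶠ i in l, AEMeasurable (X i) P)
    (hlim : ∀ p, Tendsto (fun i => charFn1 P (X i) p) l (𝓝 1)) (x : ℝ) :
    Tendsto (fun i => ∫ ω, u (x + X i ω) ∂P) l (𝓝 (u x)) := by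
  have hFu := integrable_FT1_schwartz u
  have hmeas : ∀ {Z : Ω → ℝ}, AEMeasurable Z P →
      AEStronglyMeasurable (fun p => FT1 u p * charFn1 P Z p) := fun hZ => by
    have := Measure.isProbabilityMeasure_map hZ
    simp only [charFn1_eq_charFun_map hZ]
    exact hFu.1.mul measurable_charFun.aestronglyMeasurable
  have htendsto := tendsto_FTinv1_of_dominated (hX.mono fun i => hmeas) hFu.norm
    (Eventually.of_forall fun i p => by
      rw [norm_mul]
      exact mul_le_of_le_one_right (norm_nonneg _) (norm_charFn1_le_one (X i) p))
    (fun p => (hlim p).const_mul (FT1 u p)) x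
  simp only [mul_one, FTinv1_FT1 u.continuous u.integrable hFu] at htendsto
  exact htendsto.congr' (hX.mono fun i hi => (integral_schwartz_add u hi x).symm)

theorem providesSol1_of_charFn1_volterra {C : ℝ} {n : ℕ} (hX : ∀ t, 0 ≤ t → AEMeasurable (X t) P)
    (hk : ∀ t, 0 < t → IntegrableOn (k t) (Ioc 0 t))
    (hψ : Measurable ψ) (hψ_le : ∀ p, ‖ψ p‖ ≤ C * (1 + |p| ^ n))
    (hφ : Measurable (Function.uncurry φ)) (hXφ : ∀ t, 0 ≤ t → ∀ p, charFn1 P (X t) p = φ t p)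
    (hvolterra : ∀ t, 0 < t → ∀ p,
      φ t p = 1 + ∫ s in Ioc 0 t, (k t s : ℂ) * (-ψ p * φ s p))
    (hφ_zero : ∀ p, Tendsto (φ · p) (𝓝[>] 0) (𝓝 1)) :
    ProvidesSol1 P X k ψ := by
  intro u
  have hψu := integrable_mul_FT1_schwartz hψ hψ_le u
  have hpos : ∀ᶠ t : ℝ in 𝓝[>] 0, 0 < t := self_mem_nhdsWithin
  refine ⟨fun s hs => ?_, fun t ht => integral_schwartz_add_eq_volterra u ht hX hψu (hk t ht) hφ
    hXφ (hvolterra t ht), tendsto_integral_schwartz_add u (hpos.mono fun t ht => hX t ht.le)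
    fun p => (hφ_zero p).congr' (hpos.mono fun t ht => (hXφ t ht.le p).symm)⟩
  have hφs : AEStronglyMeasurable (φ s) volume :=
    (hφ.comp measurable_prodMk_left).aestronglyMeasurable
  simp only [FT1_integral_schwartz_add u (hX s hs), hXφ s hs, ← mul_assoc]
  exact hψu.mul_bdd (c := 1) hφs
    (Eventually.of_forall fun p => hXφ s hs p ▸ norm_charFn1_le_one (X s) p)

end Volterra

section PowerSeries

theorem differentiable_tsum_mul_pow {a : ℕ → ℂ}
    (ha : ∀ r : ℝ, 0 ≤ r → Summable fun n => ‖a n‖ * r ^ n) :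
    Differentiable ℂ fun z => ∑' n, a n * z ^ n := by
  intro z
  have hball : DifferentiableOn ℂ (fun w => ∑' n, a n * w ^ n) (Metric.ball 0 (‖z‖ + 1)) := by
    refine Complex.differentiableOn_tsum_of_summable_norm (ha (‖z‖ + 1) (by positivity))
      (fun n => by fun_prop) Metric.isOpen_ball fun n w hw => ?_
    rw [norm_mul, norm_pow]
    gcongr
    exact (mem_ball_zero_iff.1 hw).le
  exact hball.differentiableAt (Metric.isOpen_ball.mem_nhds (by simp))

theorem norm_mul_rpow_le {s b : ℝ} (hs : s ∈ Ioc (0 : ℝ) 1) (hb : 0 ≤ b) (c : ℝ) :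
    ‖c * s ^ b‖ ≤ ‖c‖ := by
  rw [norm_mul, Real.norm_of_nonneg (Real.rpow_nonneg hs.1.le b)]
  exact mul_le_of_le_one_right (norm_nonneg c) (Real.rpow_le_one hs.1.le hs.2 hb)

theorem tendsto_integral_mul_rpow_atTop_zero {κ : ℝ → ℝ} {β : ℝ} (hβ : 0 < β)
    (hκ : IntegrableOn κ (Ioc 0 1)) :
    Tendsto (fun n : ℕ => ∫ s in Ioc (0 : ℝ) 1, κ s * s ^ (β * (n : ℝ))) atTop (𝓝 0) := by
  suffices hlim : Tendsto (fun n : ℕ => ∫ s in Ioc (0 : ℝ) 1, κ s * s ^ (β * (n : ℝ))) atTop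
      (𝓝 (∫ _ in Ioc (0 : ℝ) 1, 0)) by rwa [integral_zero] at hlim
  refine tendsto_integral_of_dominated_convergence (fun s => ‖κ s‖)
    (fun n => hκ.aestronglyMeasurable.mul (by fun_prop)) hκ.norm (fun n => ?_) ?_
  · filter_upwards [ae_restrict_mem measurableSet_Ioc] with s hs
    exact norm_mul_rpow_le hs (by positivity) (κ s)
  · rw [← restrict_Ioo_eq_restrict_Ioc]
    filter_upwards [ae_restrict_mem measurableSet_Ioo] with s hs
    have hpow := (tendsto_pow_atTop_nhds_zero_of_lt_one (Real.rpow_nonneg hs.1.le β)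
      (Real.rpow_lt_one hs.1.le hs.2 hβ)).const_mul (κ s)
    simpa only [mul_zero, Real.rpow_mul hs.1.le, Real.rpow_natCast] using hpow

theorem integral_mul_tsum_rpow_mul_pow {κ : ℝ → ℝ} {β : ℝ} (hβ : 0 ≤ β)
    (hκ : IntegrableOn κ (Ioc 0 1)) {a : ℕ → ℂ} {z : ℂ}
    (ha : Summable fun n => ‖a n‖ * ‖z‖ ^ n) :
    ∫ s in Ioc (0 : ℝ) 1, (κ s : ℂ) * ∑' n, a n * (((s ^ β : ℝ) : ℂ) * z) ^ n =
      ∑' n, a n * z ^ n * ((∫ s in Ioc (0 : ℝ) 1, κ s * s ^ (β * (n : ℝ)) : ℝ) : ℂ) := by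
  set F : ℕ → ℝ → ℂ := fun n s => a n * z ^ n * ((κ s * s ^ (β * (n : ℝ)) : ℝ) : ℂ)
  have hmoment : ∀ n : ℕ, IntegrableOn (fun s => κ s * s ^ (β * (n : ℝ))) (Ioc 0 1) := fun n => by
    refine hκ.norm.mono' (hκ.aestronglyMeasurable.mul (by fun_prop)) ?_
    filter_upwards [ae_restrict_mem measurableSet_Ioc] with s hs
    exact norm_mul_rpow_le hs (by positivity) (κ s)
  have hF : ∀ n, IntegrableOn (F n) (Ioc 0 1) := fun n => (hmoment n).ofReal.const_mul _
  have hF_sum : Summable fun n => ∫ s in Ioc (0 : ℝ) 1, ‖F n s‖ := by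
    refine (ha.mul_right (∫ s in Ioc (0 : ℝ) 1, ‖κ s‖)).of_nonneg_of_le
      (fun n => integral_nonneg fun s => norm_nonneg _) fun n => ?_
    simp only [F, norm_mul (a n * z ^ n), integral_const_mul, Complex.norm_real, norm_mul (a n),
      norm_pow]
    exact mul_le_mul_of_nonneg_left (setIntegral_mono_on (hmoment n).norm hκ.norm measurableSet_Ioc
      fun s hs => norm_mul_rpow_le hs (by positivity) (κ s)) (by positivity)
  have hterm : ∀ s ∈ Ioc (0 : ℝ) 1,
      (κ s : ℂ) * ∑' n, a n * (((s ^ β : ℝ) : ℂ) * z) ^ n = ∑' n, F n s := fun s hs => by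
    rw [← tsum_mul_left]
    refine tsum_congr fun n => ?_
    simp only [F, mul_pow, Real.rpow_mul hs.1.le, Real.rpow_natCast]
    push_cast
    ring
  rw [setIntegral_congr_fun measurableSet_Ioc hterm,
    ← (hasSum_integral_of_summable_integral_norm hF hF_sum).tsum_eq]
  simp only [F, integral_const_mul, integral_complex_ofReal]

end PowerSeries

section PhiHat

variable {k : ℝ → ℝ → ℝ} {β : ℝ}

theorem PhiHatC_zero (k : ℝ → ℝ → ℝ) (β : ℝ) : PhiHatC k β 0 = 1 := by
  rw [PhiHatC, tsum_eq_single 0 fun n hn => by simp [hn]]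
  simp [chat]

theorem PhiHatC_ofReal (k : ℝ → ℝ → ℝ) (β x : ℝ) : PhiHatC k β x = PhiHatR k β x := by
  simp only [PhiHatC, PhiHatR]
  push_cast
  rfl

theorem summable_norm_chat_mul_pow (hβ : 0 < β) (hk : IntegrableOn (k 1) (Ioc 0 1)) {r : ℝ}
    (hr : 0 ≤ r) : Summable fun n => ‖(chat k β n : ℂ)‖ * r ^ n := by
  have hratio := (tendsto_integral_mul_rpow_atTop_zero hβ hk).norm.mul_const r
  rw [norm_zero, zero_mul] at hratio
  refine summable_of_ratio_norm_eventually_le (r := 1 / 2) (by norm_num) ?_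
  filter_upwards [hratio.eventually (ge_mem_nhds one_half_pos)] with n hn
  have hnn : 0 ≤ ‖chat k β n‖ * r ^ n := by positivity
  simp only [chat, pow_succ, norm_mul, norm_norm, norm_pow, Complex.norm_real,
    Real.norm_of_nonneg hr]
  linarith [mul_le_mul_of_nonneg_left hn hnn]

theorem differentiable_PhiHatC (hβ : 0 < β) (hk : IntegrableOn (k 1) (Ioc 0 1)) :
    Differentiable ℂ (PhiHatC k β) :=
  differentiable_tsum_mul_pow fun _ hr => summable_norm_chat_mul_pow hβ hk hr

theorem PhiHatC_eq_one_add_integral (hβ : 0 < β) (hk : IntegrableOn (k 1) (Ioc 0 1)) (z : ℂ) :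
    PhiHatC k β z =
      1 + z * ∫ s in Ioc (0 : ℝ) 1, (k 1 s : ℂ) * PhiHatC k β (((s ^ β : ℝ) : ℂ) * z) := by
  have hsum := summable_norm_chat_mul_pow hβ hk (norm_nonneg z)
  have hsum' : Summable fun n => (chat k β n : ℂ) * z ^ n :=
    .of_norm (hsum.congr fun n => by rw [norm_mul, norm_pow])
  have hint := integral_mul_tsum_rpow_mul_pow hβ.le hk hsum
  simp only [PhiHatC] at hint ⊢
  rw [hint, hsum'.tsum_eq_zero_add, ← tsum_mul_left]
  simp only [chat, pow_zero, Complex.ofReal_one, mul_one]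
  congr! 3 with n
  push_cast
  ring

end PhiHat

section HomogeneousKernel

/-- `k` is homogeneous of degree `d` below the diagonal, the only region that Volterra integrals
`∫₀ᵗ k(t, s) f(s) ds` see. -/
def IsHomogeneousKernel (k : ℝ → ℝ → ℝ) (d : ℝ) : Prop :=
  ∀ t : ℝ, 0 < t → ∀ s ∈ Ioo (0 : ℝ) 1, k t (t * s) = t ^ d * k 1 s

namespace IsHomogeneousKernel

variable {k : ℝ → ℝ → ℝ} {d β t : ℝ}

theorem integrableOn (hk : IsHomogeneousKernel k d) (hk1 : IntegrableOn (k 1) (Ioc 0 1))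
    (ht : 0 < t) : IntegrableOn (k t) (Ioc 0 t) := by
  have hscaled : IntegrableOn (fun s => k t (t * s)) (Ioc 0 1) := by
    rw [integrableOn_Ioc_iff_integrableOn_Ioo] at hk1 ⊢
    exact IntegrableOn.congr_fun (hk1.const_mul (t ^ d)) (fun s hs => (hk t ht s hs).symm)
      measurableSet_Ioo
  rw [← intervalIntegrable_iff_integrableOn_Ioc_of_le zero_le_one,
    ← zero_div t, ← div_self ht.ne', IntervalIntegrable.comp_mul_left_iff ht.ne'] at hscaled
  exact (intervalIntegrable_iff_integrableOn_Ioc_of_le ht.le).1 hscaled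

theorem integral_mul (hk : IsHomogeneousKernel k (β - 1)) (ht : 0 < t) (f : ℝ → ℂ) :
    ∫ s in Ioc 0 t, (k t s : ℂ) * f s =
      ((t ^ β : ℝ) : ℂ) * ∫ s in Ioc (0 : ℝ) 1, (k 1 s : ℂ) * f (t * s) := by
  have hsubst := intervalIntegral.smul_integral_comp_mul_left (a := 0) (b := 1)
    (fun s => (k t s : ℂ) * f s) t
  rw [mul_zero, mul_one, intervalIntegral.integral_of_le ht.le,
    intervalIntegral.integral_of_le zero_le_one, Complex.real_smul] at hsubst
  have hscale : t * t ^ (β - 1) = t ^ β := by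
    rw [Real.rpow_sub_one ht.ne', mul_div_cancel₀ _ ht.ne']
  rw [← hsubst, ← hscale, integral_Ioc_eq_integral_Ioo, integral_Ioc_eq_integral_Ioo,
    Complex.ofReal_mul, mul_assoc,
    ← integral_const_mul ((t ^ (β - 1) : ℝ) : ℂ)]
  congr 1
  refine setIntegral_congr_fun measurableSet_Ioo fun s hs => ?_
  simp only [hk t ht s hs]
  push_cast
  ring

theorem PhiHatC_rpow_mul_eq_one_add_integral (hk : IsHomogeneousKernel k (β - 1)) (hβ : 0 < β)
    (hk1 : IntegrableOn (k 1) (Ioc 0 1)) (ht : 0 < t) (z : ℂ) :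
    PhiHatC k β (((t ^ β : ℝ) : ℂ) * z) =
      1 + ∫ s in Ioc 0 t, (k t s : ℂ) * (z * PhiHatC k β (((s ^ β : ℝ) : ℂ) * z)) := by
  rw [PhiHatC_eq_one_add_integral hβ hk1, hk.integral_mul ht, mul_assoc,
    ← integral_const_mul z]
  congr 2
  refine setIntegral_congr_fun measurableSet_Ioc fun s hs => ?_
  simp only [Real.mul_rpow ht.le hs.1.le]
  push_cast
  ring_nf

end IsHomogeneousKernel

end HomogeneousKernel

section LaplaceTransform

variable {Ω : Type*} [MeasurableSpace Ω] {P : Measure Ω} [IsFiniteMeasure P] {A : Ω → ℝ}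
  {F : ℂ → ℂ}

theorem norm_cexp_mul_le_one {z : ℂ} (hz : z.re ≤ 0) {a : ℝ} (ha : 0 ≤ a) :
    ‖Complex.exp (z * a)‖ ≤ 1 := by
  rw [Complex.norm_exp, Complex.re_mul_ofReal]
  exact Real.exp_le_one_iff.2 (mul_nonpos_of_nonpos_of_nonneg hz ha)

theorem Iio_zero_subset_integrableExpSet (hA : AEMeasurable A P) (hA0 : 0 ≤ᵐ[P] A) :
    Iio 0 ⊆ integrableExpSet A P := fun t ht => by
  refine Integrable.of_bound (C := 1) (by fun_prop) (hA0.mono fun ω hω => ?_)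
  rw [Real.norm_eq_abs, Real.abs_exp]
  exact Real.exp_le_one_iff.2 (mul_nonpos_of_nonpos_of_nonneg (le_of_lt ht) hω)

theorem diffContOnCl_complexMGF (hA : AEMeasurable A P) (hA0 : 0 ≤ᵐ[P] A) :
    DiffContOnCl ℂ (complexMGF A P) {z | z.re < 0} := by
  refine ⟨differentiableOn_complexMGF.mono fun z hz =>
    interior_maximal (Iio_zero_subset_integrableExpSet hA hA0) isOpen_Iio hz, ?_⟩
  rw [Complex.closure_setOfPred_re_lt]
  refine continuousOn_of_dominated (bound := fun _ => 1) (fun z _ => by fun_prop)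
    (fun z hz => hA0.mono fun ω hω => norm_cexp_mul_le_one hz hω) (integrable_const 1)
    (Eventually.of_forall fun ω => by fun_prop)

theorem complexMGF_eqOn_of_laplace_eq (hA : AEMeasurable A P) (hA0 : 0 ≤ᵐ[P] A)
    (hF : DiffContOnCl ℂ F {z | z.re < 0})
    (hlaplace : ∀ l : ℝ, 0 < l → ((∫ ω, Real.exp (-(l * A ω)) ∂P : ℝ) : ℂ) = F (-(l : ℂ))) :
    EqOn (complexMGF A P) F {z | z.re ≤ 0} := by
  have hM := diffContOnCl_complexMGF hA hA0
  have hopen : IsOpen {z : ℂ | z.re < 0} := isOpen_lt Complex.continuous_re continuous_const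
  have hreal : ∀ x : ℝ, x < 0 → complexMGF A P x = F x := fun x hx => by
    simpa [complexMGF_ofReal, mgf] using hlaplace (-x) (neg_pos.2 hx)
  have hfreq : ∃ᶠ z in 𝓝[≠] ((-1 : ℝ) : ℂ), complexMGF A P z = F z := by
    have htendsto : Tendsto ((↑) : ℝ → ℂ) (𝓝[≠] (-1)) (𝓝[≠] ((-1 : ℝ) : ℂ)) :=
      Complex.continuous_ofReal.continuousWithinAt.tendsto_nhdsWithin fun x hx => by
        simpa only [mem_compl_iff, mem_singleton_iff, Complex.ofReal_inj] using hx
    refine htendsto.frequently (Eventually.frequently ?_)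
    exact ((gt_mem_nhds neg_one_lt_zero).filter_mono nhdsWithin_le_nhds).mono hreal
  have heqOn : EqOn (complexMGF A P) F {z | z.re < 0} :=
    (hM.differentiableOn.analyticOnNhd hopen).eqOn_of_preconnected_of_frequently_eq
      (hF.differentiableOn.analyticOnNhd hopen) (convex_halfSpace_re_lt 0).isPreconnected
      (by simp) hfreq
  rw [← Complex.closure_setOfPred_re_lt]
  exact heqOn.of_subset_closure hM.continuousOn hF.continuousOn subset_closure subset_rfl

end LaplaceTransform

section Mixture

theorem charFn1_mul_of_indepFun {Ω : Type*} [MeasurableSpace Ω] {P : Measure Ω}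
    [IsFiniteMeasure P] {R Y : Ω → ℝ} (hR : AEMeasurable R P) (hY : AEMeasurable Y P)
    (hRY : IndepFun R Y P) (p : ℝ) :
    charFn1 P (fun ω => R ω * Y ω) p = ∫ ω, charFn1 P Y (p * R ω) ∂P := by
  have hGm : StronglyMeasurable fun q : ℝ × ℝ =>
      Complex.exp (Complex.I * ((p * q.1 * q.2 : ℝ) : ℂ)) :=
    Measurable.stronglyMeasurable (by fun_prop)
  have hGi : Integrable (fun q : ℝ × ℝ => Complex.exp (Complex.I * ((p * q.1 * q.2 : ℝ) : ℂ)))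
      ((P.map R).prod (P.map Y)) :=
    .of_bound hGm.aestronglyMeasurable 1
      (Eventually.of_forall fun q => (norm_cexp_I_mul_ofReal _).le)
  calc charFn1 P (fun ω => R ω * Y ω) p
      = ∫ q, Complex.exp (Complex.I * ((p * q.1 * q.2 : ℝ) : ℂ)) ∂P.map fun ω => (R ω, Y ω) := by
        rw [integral_map (hR.prodMk hY) hGm.aestronglyMeasurable]
        simp only [charFn1, mul_assoc]
    _ = ∫ ω, ∫ y, Complex.exp (Complex.I * ((p * R ω * y : ℝ) : ℂ)) ∂P.map Y ∂P := by
        rw [(indepFun_iff_map_prod_eq_prod_map_map hR hY).1 hRY, integral_prod _ hGi,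
          integral_map hR hGm.integral_prod_right'.aestronglyMeasurable]
    _ = ∫ ω, charFn1 P Y (p * R ω) ∂P := by
        congr! with ω
        exact integral_map hY (by fun_prop)

end Mixture

section HomogeneousSymbol

/-- `ψ` is positively homogeneous of degree `δ`, as are the characteristic exponents
`|p| ^ δ * (1 - i * ρ * sign p * tan (π * δ / 2))` of strictly stable laws. -/
def IsHomogeneousSymbol (ψ : ℝ → ℂ) (δ : ℝ) : Prop :=
  ∀ c : ℝ, 0 < c → ∀ p : ℝ, ψ (c * p) = ((c ^ δ : ℝ) : ℂ) * ψ p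

namespace IsHomogeneousSymbol

variable {ψ : ℝ → ℂ} {δ : ℝ}

theorem map_zero (hψ : IsHomogeneousSymbol ψ δ) (hδ : δ ≠ 0) : ψ 0 = 0 := by
  by_contra hne
  have htwo := hψ 2 two_pos 0
  rw [mul_zero, eq_comm, mul_eq_right₀ hne, Complex.ofReal_eq_one, ← Real.rpow_zero 2,
    Real.rpow_right_inj two_pos (by norm_num)] at htwo
  exact hδ htwo

theorem map_mul_rpow (hψ : IsHomogeneousSymbol ψ δ) (hδ : δ ≠ 0) {a : ℝ} (ha : 0 ≤ a) (p : ℝ) :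
    ψ (p * a ^ (1 / δ)) = a * ψ p := by
  rcases ha.eq_or_lt with rfl | ha
  · simp [Real.zero_rpow (inv_ne_zero hδ), hψ.map_zero hδ]
  · rw [mul_comm, hψ _ (Real.rpow_pos_of_pos ha _), ← Real.rpow_mul ha.le,
      one_div_mul_cancel hδ, Real.rpow_one]

theorem eq_abs_rpow_mul (hψ : IsHomogeneousSymbol ψ δ) (hδ : δ ≠ 0) (p : ℝ) :
    ψ p = ((|p| ^ δ : ℝ) : ℂ) * if 0 ≤ p then ψ 1 else ψ (-1) := by
  rcases lt_trichotomy p 0 with hp | rfl | hp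
  · rw [if_neg hp.not_ge, ← hψ _ (abs_pos.2 hp.ne), abs_of_neg hp, neg_mul_neg, mul_one]
  · rw [hψ.map_zero hδ, abs_zero, Real.zero_rpow hδ, Complex.ofReal_zero, zero_mul]
  · rw [if_pos hp.le, ← hψ _ (abs_pos.2 hp.ne'), abs_of_pos hp, mul_one]

theorem measurable (hψ : IsHomogeneousSymbol ψ δ) (hδ : δ ≠ 0) : Measurable ψ := by
  rw [funext (hψ.eq_abs_rpow_mul hδ)]
  exact Measurable.mul (by fun_prop)
    (.ite measurableSet_Ici measurable_const measurable_const)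

theorem norm_le (hψ : IsHomogeneousSymbol ψ δ) (hδ : 0 < δ) (p : ℝ) :
    ‖ψ p‖ ≤ max ‖ψ 1‖ ‖ψ (-1)‖ * (1 + |p| ^ ⌈δ⌉₊) := by
  have hrpow : |p| ^ δ ≤ 1 + |p| ^ ⌈δ⌉₊ := by
    rcases le_total |p| 1 with hp | hp
    · exact (Real.rpow_le_one (abs_nonneg p) hp hδ.le).trans
        (le_add_of_nonneg_right (by positivity))
    · rw [← Real.rpow_natCast]
      exact (Real.rpow_le_rpow_of_exponent_le hp (Nat.le_ceil δ)).trans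
        (le_add_of_nonneg_left zero_le_one)
  rw [hψ.eq_abs_rpow_mul hδ.ne', norm_mul, Complex.norm_real,
    Real.norm_of_nonneg (by positivity), mul_comm]
  gcongr
  split_ifs
  exacts [le_max_left _ _, le_max_right _ _]

end IsHomogeneousSymbol

theorem isHomogeneousSymbol_psiStable (δ ρ : ℝ) : IsHomogeneousSymbol (psiStable δ ρ) δ := by
  intro c hc p
  have hneg : c * p < 0 ↔ p < 0 := smul_neg_iff_of_pos_left hc
  have hsign : Real.sign (c * p) = Real.sign p := by
    simp only [Real.sign, hneg, mul_pos_iff_of_pos_left hc]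
  rw [psiStable, psiStable, hsign, abs_mul, abs_of_pos hc, Real.mul_rpow hc.le (abs_nonneg p)]
  push_cast
  ring

end HomogeneousSymbol

theorem integrable_of_integrable_abs_rpow {α : Type*} [MeasurableSpace α] {μ : Measure α}
    [IsFiniteMeasure μ] {f : α → ℝ} (hf : AEStronglyMeasurable f μ) {q : ℝ} (hq : 1 ≤ q)
    (hfq : Integrable (fun a => |f a| ^ q) μ) : Integrable f μ := by
  have hq0 : 0 < q := zero_lt_one.trans_le hq
  have hmem : MemLp f (ENNReal.ofReal q) μ := by
    rw [← integrable_norm_rpow_iff hf (by simpa using hq0) ENNReal.ofReal_ne_top,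
      ENNReal.toReal_ofReal hq0.le]
    exact hfq
  exact hmem.integrable (ENNReal.one_le_ofReal.2 hq)

theorem indepFun_of_indep_iSup_comap {Ω ι α β : Type*} [MeasurableSpace Ω]
    [mα : MeasurableSpace α] [mβ : MeasurableSpace β] {P : Measure Ω} {A : Ω → α} {Y : ι → Ω → β}
    (h : Indep (⨆ i, mβ.comap (Y i)) (mα.comap A) P) (i : ι) : IndepFun A (Y i) P :=
  (indep_of_indep_of_le_left h (le_iSup (fun i => mβ.comap (Y i)) i)).symm

section StochasticSolution

variable {Ω : Type*} [MeasurableSpace Ω] {P : Measure Ω} {A : Ω → ℝ} {ψ : ℝ → ℂ} {δ : ℝ}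

theorem IsHomogeneousSymbol.charFn1_rpow_mul [IsFiniteMeasure P]
    (hψ : IsHomogeneousSymbol ψ δ) (hδ : δ ≠ 0) (hA : AEMeasurable A P) (hA0 : 0 ≤ᵐ[P] A)
    {Y : Ω → ℝ} (hY : AEMeasurable Y P) (hAY : IndepFun A Y P) {c : ℝ}
    (hYchar : ∀ p, charFn1 P Y p = Complex.exp (-(c : ℂ) * ψ p)) (p : ℝ) :
    charFn1 P (fun ω => A ω ^ (1 / δ) * Y ω) p = complexMGF A P (-(c : ℂ) * ψ p) := by
  have hpow : Measurable fun a : ℝ => a ^ (1 / δ) := by fun_prop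
  have hRY : IndepFun (fun ω => A ω ^ (1 / δ)) Y P := hAY.comp hpow measurable_id
  rw [charFn1_mul_of_indepFun (by fun_prop) hY hRY, complexMGF]
  refine integral_congr_ae (hA0.mono fun ω hω => ?_)
  simp only [hYchar, hψ.map_mul_rpow hδ hω]
  ring_nf

theorem re_nonpos_of_charFn1_eq_cexp [IsProbabilityMeasure P] {Y : Ω → ℝ} {z : ℂ} {p : ℝ}
    (h : charFn1 P Y p = Complex.exp z) : z.re ≤ 0 := by
  have hle := norm_charFn1_le_one (P := P) Y p
  rwa [h, Complex.norm_exp, Real.exp_le_one_iff] at hle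

theorem stmt19_general [IsProbabilityMeasure P] {k : ℝ → ℝ → ℝ} {β : ℝ} (hβ : 0 < β)
    (hk : IsHomogeneousKernel k (β - 1)) (hk1 : IntegrableOn (k 1) (Ioo 0 1))
    (hδ : 0 < δ) (hψ : IsHomogeneousSymbol ψ δ) (hA : AEMeasurable A P) (hA0 : 0 ≤ᵐ[P] A)
    (hlaplace : ∀ l : ℝ, 0 < l → (∫ ω, Real.exp (-(l * A ω)) ∂P) = PhiHatR k β (-l))
    {Y : ℝ → Ω → ℝ} (hY : ∀ t, 0 ≤ t → AEMeasurable (Y t) P)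
    (hYchar : ∀ t, 0 ≤ t → ∀ p, charFn1 P (Y t) p = Complex.exp (-((t ^ β : ℝ) : ℂ) * ψ p))
    (hAY : ∀ t, 0 ≤ t → IndepFun A (Y t) P) :
    (∀ p t, 0 ≤ t → charFn1 P (fun ω => A ω ^ (1 / δ) * Y t ω) p =
      PhiHatC k β (-((t ^ β : ℝ) : ℂ) * ψ p)) ∧
    ProvidesSol1 P (fun t ω => A ω ^ (1 / δ) * Y t ω) k ψ := by
  rw [← integrableOn_Ioc_iff_integrableOn_Ioo] at hk1
  have hΦ := differentiable_PhiHatC hβ hk1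
  have hMGF : EqOn (complexMGF A P) (PhiHatC k β) {z | z.re ≤ 0} :=
    complexMGF_eqOn_of_laplace_eq hA hA0 hΦ.diffContOnCl fun l hl => by
      rw [hlaplace l hl, ← Complex.ofReal_neg, PhiHatC_ofReal]
  have hchar : ∀ t, 0 ≤ t → ∀ p, charFn1 P (fun ω => A ω ^ (1 / δ) * Y t ω) p =
      PhiHatC k β (-((t ^ β : ℝ) : ℂ) * ψ p) := fun t ht p => by
    rw [hψ.charFn1_rpow_mul hδ.ne' hA hA0 (hY t ht) (hAY t ht) (hYchar t ht)]
    exact hMGF (re_nonpos_of_charFn1_eq_cexp (hYchar t ht p))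
  have hψm := hψ.measurable hδ.ne'
  have hΦm : Measurable (Function.uncurry fun (t : ℝ) p =>
      PhiHatC k β (-((t ^ β : ℝ) : ℂ) * ψ p)) :=
    hΦ.continuous.measurable.comp (by fun_prop)
  refine ⟨fun p t ht => hchar t ht p, providesSol1_of_charFn1_volterra
    (fun t ht => AEMeasurable.mul (by fun_prop) (hY t ht)) (fun t ht => hk.integrableOn hk1 ht)
    hψm (hψ.norm_le hδ) hΦm hchar (fun t ht p => ?_) fun p => ?_⟩
  · simpa only [neg_mul, mul_neg] using
      hk.PhiHatC_rpow_mul_eq_one_add_integral hβ hk1 ht (-ψ p)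
  · have hcont : Continuous fun t : ℝ => PhiHatC k β (-((t ^ β : ℝ) : ℂ) * ψ p) :=
      hΦ.continuous.comp (by fun_prop (disch := exact hβ.le))
    simpa [Real.zero_rpow hβ.ne', PhiHatC_zero] using (hcont.tendsto 0).mono_left
      (nhdsWithin_le_nhds (s := Ioi 0))

end StochasticSolution

theorem stmt19 (k : ℝ → ℝ → ℝ) (β : ℝ) (hβ0 : 0 < β) (hβ2 : β < 2) (hβ1 : β ≠ 1)
    (hkm : Measurable (Function.uncurry k))
    (hhom : ∀ t : ℝ, 0 < t → ∀ s ∈ Set.Ioo (0:ℝ) 1, k t (t * s) = t ^ (β - 1) * k 1 s)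
    (ε : ℝ) (hε : 0 < ε)
    (hkL : MeasureTheory.IntegrableOn (fun s => |k 1 s| ^ (1 + ε)) (Set.Ioo 0 1))
    (hCM : CMon (fun x => PhiHatR k β (-x)))
    (δ ρ : ℝ) (hδ1 : β < δ) (hδ2 : δ ≤ 2) (hδ3 : δ ≠ 1) (hρ1 : -1 ≤ ρ) (hρ2 : ρ ≤ 1)
    {Ω : Type*} [MeasurableSpace Ω] (P : Measure Ω) [IsProbabilityMeasure P]
    (A : Ω → ℝ) (hAm : Measurable A) (hA0 : ∀ ω, 0 ≤ A ω)
    (hALap : ∀ l : ℝ, 0 < l → (∫ ω, Real.exp (-(l * A ω)) ∂P) = PhiHatR k β (-l))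
    (Y : ℝ → Ω → ℝ) (hYm : Measurable (Function.uncurry Y))
    (hYchar : ∀ t : ℝ, 0 ≤ t → ∀ p : ℝ,
      charFn1 P (Y t) p = Complex.exp (-((t ^ β : ℝ) : ℂ) * psiStable δ ρ p))
    (hInd : ProbabilityTheory.Indep
      (⨆ t : ℝ, MeasurableSpace.comap (Y t) inferInstance)
      (MeasurableSpace.comap A inferInstance) P) :
    (∀ p : ℝ, ∀ t : ℝ, 0 ≤ t →
      charFn1 P (fun ω => A ω ^ (1 / δ) * Y t ω) p =
        PhiHatC k β (-((t ^ β : ℝ) : ℂ) * psiStable δ ρ p)) ∧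
    ProvidesSol1 P (fun t ω => A ω ^ (1 / δ) * Y t ω) k (psiStable δ ρ) := by
  exact stmt19_general hβ0 hhom
    (integrable_of_integrable_abs_rpow (hkm.comp measurable_prodMk_left).aestronglyMeasurable
      (le_add_of_nonneg_right hε.le) hkL)
    (hβ0.trans hδ1) (isHomogeneousSymbol_psiStable δ ρ)
    hAm.aemeasurable (Eventually.of_forall hA0) hALap
    (fun t _ => (hYm.comp measurable_prodMk_left).aemeasurable) hYchar
    fun t _ => indepFun_of_indep_iSup_comap hInd t
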